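/- arXiv:2112.06781 — 2 statements merged into one kernel-verified Lean document; each statement's English description precedes it below -/
import Mathlib

section
/- Let (V,d) be a finite tree metric space and let Δ be a maximal simplex of diameter r_m in VR_{r_m}(V) that is a coface of a non-tree edge of length r_m. For any two non-tree edges f = {v,w} and e = {x,y} of length r_m contained in Δ and any vertex v ∈ f, at least one of {v,x}, {v,y} is a non-tree edge of length r_m contained in Δ. -/
def VRComplex (X : Type*) [MetricSpace X] (t : ℝ) : Set (Finset X) :=
  {σ | σ.Nonempty ∧ ∀ x ∈ σ, ∀ y ∈ σ, dist x y ≤ t}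

/-!
Let the paths from `x` and `y` to the path `vw` first meet it at `m` and `n`. The distance from `x`
to any point of that path is additive through `m`, and likewise for `y` and `n`; comparing the
positions of `m` and `n` on `vw` gives the four-point condition. When `vw` and `xy` both have length
`r`, the diameter of `Δ`, it says that `2r` is at most `d(v,x) + d(w,y)` or at most
`d(v,y) + d(w,x)`, and no summand exceeds `r`; hence `d(v,x) = r` or `d(v,y) = r`. Such a pair, say
`vx`, is not a tree edge: seen from `y`, one end of a tree edge `vx` would lie behind the other at
distance `r`, so that either `d(y,v) = 2r`, or `y = v` and `xy` would itself be a tree edge.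
-/

/-- The distance between the ends of every path of `G` is the sum of the lengths `l` of its edges.
When `G` is a tree, this says that `dist` is the path metric of the weighted tree `(G, l)`. -/
def IsPathMetric {V : Type*} [Dist V] (G : SimpleGraph V) (l : Sym2 V → ℝ) : Prop :=
  ∀ (x y : V) (p : G.Walk x y), p.IsPath → dist x y = (p.edges.map l).sum

/-- `{x, y}` is a non-tree edge of length `r`, for a tree `G`; the elements of the paper's `E_Δ`
are the non-tree edges of length `r_m` with both ends in `Δ`. -/
def IsNonTreeEdge {V : Type*} [Dist V] (G : SimpleGraph V) (r : ℝ) (x y : V) : Prop :=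
  x ≠ y ∧ dist x y = r ∧ ¬G.Adj x y

theorem IsNonTreeEdge.symm {V : Type*} [PseudoMetricSpace V] {G : SimpleGraph V} {r : ℝ} {x y : V}
    (h : IsNonTreeEdge G r x y) : IsNonTreeEdge G r y x :=
  ⟨h.1.symm, dist_comm y x ▸ h.2.1, fun hadj ↦ h.2.2 hadj.symm⟩

section Walk

variable {V : Type*} {G : SimpleGraph V} {a b c u v : V}

theorem isPath_append_of_support_inter {p : G.Walk a b} {q : G.Walk b c} (hp : p.IsPath)
    (hq : q.IsPath) (h : ∀ z ∈ p.support, z ∈ q.support → z = b) : (p.append q).IsPath := by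
  have hbq : b ∉ q.support.tail ∧ q.support.tail.Nodup := by
    rw [← List.nodup_cons, q.cons_tail_support]
    exact hq.support_nodup
  rw [SimpleGraph.Walk.isPath_def, SimpleGraph.Walk.support_append]
  refine hp.support_nodup.append hbq.2 fun z hzp hzq ↦ ?_
  obtain rfl := h z hzp (List.mem_of_mem_tail hzq)
  exact hbq.1 hzq

theorem exists_isPath_support_subset (p : G.Walk u v) (ha : a ∈ p.support) (hb : b ∈ p.support) :
    ∃ q : G.Walk a b, q.IsPath ∧ q.support ⊆ p.support := by
  classical
  let q := (p.takeUntil a ha).reverse.append (p.takeUntil b hb)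
  have hq : q.support ⊆ p.support := by
    intro z hz
    rw [SimpleGraph.Walk.mem_support_append_iff, SimpleGraph.Walk.support_reverse,
      List.mem_reverse] at hz
    exact hz.elim (p.support_takeUntil_subset_support ha ·)
      (p.support_takeUntil_subset_support hb ·)
  exact ⟨q.bypass, q.bypass_isPath, List.Subset.trans q.support_bypass_subset_support hq⟩

theorem exists_isPath_support_inter_eq (hG : G.Preconnected) (p : G.Walk u v) (x : V) :
    ∃ m ∈ p.support, ∃ q : G.Walk x m, q.IsPath ∧ ∀ z ∈ q.support, z ∈ p.support → z = m := by
  classical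
  obtain ⟨q, hq⟩ := hG.exists_isPath x u
  obtain ⟨m, hmp, hmq, hfirst⟩ :=
    q.exists_mem_support_forall_mem_support_imp_eq p.support.toFinset ⟨u, by simp⟩
  exact ⟨m, List.mem_toFinset.1 hmp, q.takeUntil m hmq, hq.takeUntil hmq,
    fun z hzq hzp ↦ hfirst z (List.mem_toFinset.2 hzp) hzq⟩

end Walk

namespace IsPathMetric

section Dist

variable {V : Type*} [Dist V] {G : SimpleGraph V} {l : Sym2 V → ℝ} {a b c m n : V}

theorem dist_eq_add_of_append (hd : IsPathMetric G l) {p : G.Walk a b} {q : G.Walk b c}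
    (h : (p.append q).IsPath) : dist a c = dist a b + dist b c := by
  rw [hd a c _ h, hd a b p h.of_append_left, hd b c q h.of_append_right,
    SimpleGraph.Walk.edges_append, List.map_append, List.sum_append]

theorem dist_eq_add_of_mem_support (hd : IsPathMetric G l) {p : G.Walk a b} (hp : p.IsPath)
    (hm : m ∈ p.support) : dist a b = dist a m + dist m b := by
  obtain ⟨q, s, -, -, rfl⟩ := hp.mem_support_iff_exists_append.1 hm
  exact hd.dist_eq_add_of_append hp

theorem dist_eq_add_or_dist_eq_add_of_mem_support (hd : IsPathMetric G l) {p : G.Walk a b}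
    (hp : p.IsPath) (hm : m ∈ p.support) (hn : n ∈ p.support) :
    dist a n = dist a m + dist m n ∨ dist a m = dist a n + dist n m := by
  obtain ⟨q, s, hq, hs, rfl⟩ := hp.mem_support_iff_exists_append.1 hn
  rcases (q.mem_support_append_iff s).1 hm with hmq | hms
  · exact Or.inl (hd.dist_eq_add_of_mem_support hq hmq)
  · right
    have hamb := hd.dist_eq_add_of_mem_support hp hm
    have hanb := hd.dist_eq_add_of_append hp
    have hnmb := hd.dist_eq_add_of_mem_support hs hms
    linarith

theorem exists_mem_support_forall_dist_eq_add (hd : IsPathMetric G l) (hG : G.Preconnected)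
    (p : G.Walk a b) (x : V) :
    ∃ m ∈ p.support, ∀ u ∈ p.support, dist x u = dist x m + dist m u := by
  obtain ⟨m, hm, q, hq, hqp⟩ := exists_isPath_support_inter_eq hG p x
  refine ⟨m, hm, fun u hu ↦ ?_⟩
  obtain ⟨s, hs, hsp⟩ := exists_isPath_support_subset p hm hu
  exact hd.dist_eq_add_of_append
    (isPath_append_of_support_inter hq hs fun z hzq hzs ↦ hqp z hzq (hsp hzs))

theorem dist_eq_add_or_dist_eq_add_of_adj (hd : IsPathMetric G l) (hG : G.Preconnected)
    (h : G.Adj a b) (y : V) :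
    dist y b = dist y a + dist a b ∨ dist y a = dist y b + dist b a := by
  obtain ⟨m, hm, hgate⟩ := hd.exists_mem_support_forall_dist_eq_add hG h.toWalk y
  have hmab : m = a ∨ m = b := by simpa using hm
  rcases hmab with rfl | rfl
  · exact Or.inl (hgate b (by simp))
  · exact Or.inr (hgate a (by simp))

end Dist

theorem four_point {V : Type*} [PseudoMetricSpace V] {G : SimpleGraph V} {l : Sym2 V → ℝ}
    (hd : IsPathMetric G l) (hG : G.Preconnected) (v w x y : V) :
    dist v w + dist x y ≤ max (dist v x + dist w y) (dist v y + dist w x) := by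
  obtain ⟨p, hp⟩ := hG.exists_isPath v w
  obtain ⟨m, hm, hgate_x⟩ := hd.exists_mem_support_forall_dist_eq_add hG p x
  obtain ⟨n, hn, hgate_y⟩ := hd.exists_mem_support_forall_dist_eq_add hG p y
  have hvx : dist v x = dist x m + dist v m := by
    simpa only [dist_comm _ v] using hgate_x v p.start_mem_support
  have hwx : dist w x = dist x m + dist m w := dist_comm w x ▸ hgate_x w p.end_mem_support
  have hvy : dist v y = dist y n + dist v n := by
    simpa only [dist_comm _ v] using hgate_y v p.start_mem_support
  have hwy : dist w y = dist y n + dist n w := dist_comm w y ▸ hgate_y w p.end_mem_support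
  have hvmw := hd.dist_eq_add_of_mem_support hp hm
  have hvnw := hd.dist_eq_add_of_mem_support hp hn
  have hxy : dist x y ≤ dist x m + dist m n + dist y n :=
    dist_comm y n ▸ dist_triangle4 x m n y
  rw [le_max_iff]
  rcases hd.dist_eq_add_or_dist_eq_add_of_mem_support hp hm hn with hvmn | hvnm
  · right
    linarith
  · left
    linarith [dist_comm m n]

section Metric

variable {V : Type*} [MetricSpace V] {G : SimpleGraph V} {l : Sym2 V → ℝ} {r : ℝ} {Δ : Finset V}
  {v w x y : V}

theorem eq_of_adj_of_dist_le_of_dist_lt (hd : IsPathMetric G l) (hG : G.Preconnected)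
    (hadj : G.Adj v x) (hle : dist x y ≤ dist v x) (hlt : dist v y < dist v x + dist x y) :
    v = y := by
  rcases hd.dist_eq_add_or_dist_eq_add_of_adj hG hadj y with h | h
  · refine dist_le_zero.1 ?_
    linarith [dist_comm x y, dist_comm v y]
  · linarith [dist_comm x y, dist_comm v y, dist_comm v x]

theorem dist_eq_or_dist_eq_of_mem_VRComplex (hd : IsPathMetric G l) (hG : G.Preconnected)
    (hΔ : Δ ∈ VRComplex V r) (hv : v ∈ Δ) (hw : w ∈ Δ) (hx : x ∈ Δ) (hy : y ∈ Δ)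
    (hvw : dist v w = r) (hxy : dist x y = r) : dist v x = r ∨ dist v y = r := by
  have hvx := hΔ.2 v hv x hx
  have hvy := hΔ.2 v hv y hy
  have hwx := hΔ.2 w hw x hx
  have hwy := hΔ.2 w hw y hy
  rcases le_max_iff.1 (hd.four_point hG v w x y) with h | h
  · exact Or.inl (by linarith)
  · exact Or.inr (by linarith)

theorem isNonTreeEdge_of_dist_eq (hd : IsPathMetric G l) (hG : G.Preconnected)
    (hvy : dist v y ≤ r) (he : IsNonTreeEdge G r x y) (hvx : dist v x = r) :
    IsNonTreeEdge G r v x := by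
  obtain ⟨hne, hxy, hnadj⟩ := he
  have hr : 0 < r := hxy ▸ dist_pos.2 hne
  refine ⟨dist_pos.1 (hvx ▸ hr), hvx, fun hadj ↦ ?_⟩
  have hv_eq_y : v = y :=
    hd.eq_of_adj_of_dist_le_of_dist_lt hG hadj (by linarith) (by linarith)
  exact hnadj (hv_eq_y ▸ hadj.symm)

end Metric

end IsPathMetric

theorem stmt13_general {V : Type*} [MetricSpace V] {G : SimpleGraph V} {l : Sym2 V → ℝ}
    (hG : G.Preconnected) (hd : IsPathMetric G l) {r : ℝ} {Δ : Finset V}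
    (hΔ : Δ ∈ VRComplex V r) {v w x y : V} (hv : v ∈ Δ) (hw : w ∈ Δ) (hvw : dist v w = r)
    (hx : x ∈ Δ) (hy : y ∈ Δ) (he : IsNonTreeEdge G r x y) :
    IsNonTreeEdge G r v x ∨ IsNonTreeEdge G r v y :=
  (hd.dist_eq_or_dist_eq_of_mem_VRComplex hG hΔ hv hw hx hy hvw he.2.1).imp
    (hd.isNonTreeEdge_of_dist_eq hG (hΔ.2 v hv y hy) he)
    (hd.isNonTreeEdge_of_dist_eq hG (hΔ.2 v hv x hx) he.symm)

/-- In a finite tree metric space, let `Δ` be a maximal simplex of `VR_r(V)`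
containing the non-tree edges `f = {v,w}` and `e = {x,y}` of length `r`. Then for
the vertex `v` of `f`, at least one of `{v,x}`, `{v,y}` is a non-tree edge of length
`r` (contained in `Δ`). -/
theorem stmt13 (V : Type*) [MetricSpace V] [Fintype V]
    (G : SimpleGraph V) (l : Sym2 V → ℝ) (hT : G.IsTree)
    (hl : ∀ e ∈ G.edgeSet, 0 < l e)
    (hd : ∀ (x y : V) (p : G.Walk x y), p.IsPath → dist x y = (p.edges.map l).sum)
    (r : ℝ) (Δ : Finset V) (hΔ : Δ ∈ VRComplex V r)
    (hmax : ∀ σ ∈ VRComplex V r, Δ ⊆ σ → σ = Δ)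
    (v w x y : V) (hvw : v ≠ w) (hvΔ : v ∈ Δ) (hwΔ : w ∈ Δ)
    (hdvw : dist v w = r) (hf : ¬G.Adj v w)
    (hxy : x ≠ y) (hxΔ : x ∈ Δ) (hyΔ : y ∈ Δ)
    (hdxy : dist x y = r) (he : ¬G.Adj x y) :
    (v ≠ x ∧ dist v x = r ∧ ¬G.Adj v x) ∨ (v ≠ y ∧ dist v y = r ∧ ¬G.Adj v y) :=
  stmt13_general hT.connected.preconnected hd hΔ hvΔ hwΔ hdvw hxΔ hyΔ ⟨hxy, hdxy, he⟩
end

section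
/- Let (V,d) be a finite tree metric space with distance values 0 = r₀ < r₁ < ⋯ < r_l. If Δ and Δ' are two distinct maximal simplices of VR_{r_m}(V) each containing a non-tree edge of length r_m, and Δ ∩ Δ' is nonempty, then Δ ∩ Δ' is a simplex of VR_{r_{m−1}}(V) ∪ T_{r_m}, i.e., either diam(Δ∩Δ') ≤ r_{m−1} or Δ∩Δ' is a tree edge of length r_m. -/
/-!
In a tree the points at which `x` and `y` attach to the path from `a` to `b` lie on it in one of
two orders, and comparing lengths in either order gives the four-point inequality
`d(x, y) + d(a, b) ≤ max (d(x, a) + d(y, b)) (d(x, b) + d(y, a))`.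
If simplices `Δ` and `Δ'` of `VR_r` share two vertices `a`, `b` with `d(a, b) = r`, then for `x ∈ Δ`
and `y ∈ Δ'` the right-hand side is at most `2r`, so `d(x, y) ≤ r`. Hence `Δ ∪ Δ'` is a simplex of
`VR_r`, and if `Δ` and `Δ'` are maximal they are equal.
-/

section Walks

open SimpleGraph

variable {V : Type*} {G : SimpleGraph V}

theorem isPath_append_of_forall_mem_support {x p c : V} {q : G.Walk x p} {w : G.Walk p c}
    (hq : q.IsPath) (hw : w.IsPath) (h : ∀ z ∈ q.support, z ∈ w.support → z = p) :
    (q.append w).IsPath := by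
  have hnodup : p ∉ w.support.tail ∧ w.support.tail.Nodup := by
    rw [← List.nodup_cons, w.cons_tail_support]
    exact hw.support_nodup
  rw [Walk.isPath_def, Walk.support_append]
  refine hq.support_nodup.append hnodup.2 fun z hzq hzw ↦ hnodup.1 ?_
  exact h z hzq (List.mem_of_mem_tail hzw) ▸ hzw

theorem exists_isPath_support_subset_s15 {a b p c : V} (w : G.Walk a b) (hp : p ∈ w.support)
    (hc : c ∈ w.support) : ∃ q : G.Walk p c, q.IsPath ∧ q.support ⊆ w.support := by
  classical
  let q : G.Walk p c := (w.takeUntil p hp).reverse.append (w.takeUntil c hc)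
  refine ⟨q.bypass, q.bypass_isPath, fun z hz ↦ ?_⟩
  rcases Walk.mem_support_append_iff _ _ |>.1 (q.support_bypass_subset_support hz) with hz | hz
  · rw [Walk.support_reverse, List.mem_reverse] at hz
    exact w.support_takeUntil_subset_support hp hz
  · exact w.support_takeUntil_subset_support hc hz

theorem exists_isPath_inter_support_eq (hG : G.Preconnected) {a b : V} (w : G.Walk a b) (x : V) :
    ∃ p ∈ w.support, ∃ q : G.Walk x p, q.IsPath ∧ ∀ z ∈ q.support, z ∈ w.support → z = p := by
  classical
  obtain ⟨q, hq⟩ := hG.exists_isPath x a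
  obtain ⟨p, hpw, hpq, hfirst⟩ := q.exists_mem_support_forall_mem_support_imp_eq w.support.toFinset
    ⟨a, by simp⟩
  exact ⟨p, List.mem_toFinset.1 hpw, q.takeUntil p hpq, hq.takeUntil hpq,
    fun z hzq hzw ↦ hfirst z (List.mem_toFinset.2 hzw) hzq⟩

end Walks

/-- The four-point condition on a metric space (`0`-hyperbolicity in the sense of Gromov),
stated for ordered quadruples. It is the property of tree metrics that controls the Vietoris–Rips
complex. -/
def FourPointCondition (X : Type*) [PseudoMetricSpace X] : Prop :=
  ∀ x y a b : X, dist x y + dist a b ≤ max (dist x a + dist y b) (dist x b + dist y a)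

/-- The metric of `V` is the path metric of the graph `G` with edge lengths `l`, in the strong sense
that the length of every path of `G` is the distance between its ends. This is meant for trees,
where paths are unique. -/
def IsPathLengthMetric {V : Type*} [PseudoMetricSpace V] (G : SimpleGraph V) (l : Sym2 V → ℝ) :
    Prop :=
  ∀ (x y : V) (p : G.Walk x y), p.IsPath → dist x y = (p.edges.map l).sum

namespace IsPathLengthMetric

variable {V : Type*} [PseudoMetricSpace V] {G : SimpleGraph V} {l : Sym2 V → ℝ}

theorem dist_eq_of_isPath_append (hd : IsPathLengthMetric G l) {x p c : V} {q : G.Walk x p}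
    {w : G.Walk p c} (h : (q.append w).IsPath) : dist x c = dist x p + dist p c := by
  rw [hd x c _ h, hd x p q h.of_append_left, hd p c w h.of_append_right,
    SimpleGraph.Walk.edges_append, List.map_append, List.sum_append]

theorem dist_eq_of_mem_support (hd : IsPathLengthMetric G l) {a b p : V} {w : G.Walk a b}
    (hw : w.IsPath) (hp : p ∈ w.support) : dist a b = dist a p + dist p b := by
  obtain ⟨q, q', rfl⟩ := w.mem_support_iff_exists_append.1 hp
  exact hd.dist_eq_of_isPath_append hw

theorem dist_eq_or_of_mem_support (hd : IsPathLengthMetric G l) {a b p q : V} {w : G.Walk a b}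
    (hw : w.IsPath) (hp : p ∈ w.support) (hq : q ∈ w.support) :
    dist a b = dist a p + dist p q + dist q b ∨ dist a b = dist a q + dist q p + dist p b := by
  obtain ⟨u, v, hu, hv, rfl⟩ := hw.mem_support_iff_exists_append.1 hp
  have hab : dist a b = dist a p + dist p b := hd.dist_eq_of_isPath_append hw
  rcases SimpleGraph.Walk.mem_support_append_iff _ _ |>.1 hq with hq | hq
  · right
    rw [hab, hd.dist_eq_of_mem_support hu hq]
  · left
    rw [hab, hd.dist_eq_of_mem_support hv hq, add_assoc]

theorem exists_gate_mem_support (hd : IsPathLengthMetric G l) (hG : G.Preconnected) {a b : V}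
    (w : G.Walk a b) (x : V) :
    ∃ p ∈ w.support, ∀ c ∈ w.support, dist x c = dist x p + dist p c := by
  obtain ⟨p, hp, q, hq, hqw⟩ := exists_isPath_inter_support_eq hG w x
  refine ⟨p, hp, fun c hc ↦ ?_⟩
  obtain ⟨v, hv, hvw⟩ := exists_isPath_support_subset_s15 w hp hc
  exact hd.dist_eq_of_isPath_append <|
    isPath_append_of_forall_mem_support hq hv fun z hzq hzv ↦ hqw z hzq (hvw hzv)

theorem fourPointCondition (hd : IsPathLengthMetric G l) (hG : G.Preconnected) :
    FourPointCondition V := by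
  intro x y a b
  obtain ⟨w, hw⟩ := hG.exists_isPath a b
  obtain ⟨p, hp, hxp⟩ := hd.exists_gate_mem_support hG w x
  obtain ⟨q, hq, hyq⟩ := hd.exists_gate_mem_support hG w y
  have hxa := hxp a w.start_mem_support
  have hxb := hxp b w.end_mem_support
  have hya := hyq a w.start_mem_support
  have hyb := hyq b w.end_mem_support
  have hxy : dist x y ≤ dist x p + dist p q + dist y q := by
    simpa only [dist_comm q y] using dist_triangle4 x p q y
  rcases hd.dist_eq_or_of_mem_support hw hp hq with hapqb | haqpb
  · have haq : dist a p + dist p q ≤ dist a q := by linarith [dist_triangle a q b]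
    have hpb : dist p q + dist q b ≤ dist p b := by linarith [dist_triangle a p b]
    refine le_max_of_le_right ?_
    linarith [dist_comm q a]
  · have hap : dist a q + dist q p ≤ dist a p := by linarith [dist_triangle a p b]
    have hqb : dist q p + dist p b ≤ dist q b := by linarith [dist_triangle a q b]
    refine le_max_of_le_left ?_
    linarith [dist_comm p a, dist_comm p q]

end IsPathLengthMetric

theorem FourPointCondition.union_mem_VRComplex {X : Type*} [MetricSpace X] [DecidableEq X]
    (hX : FourPointCondition X) {r : ℝ} {Δ Δ' : Finset X} (hΔ : Δ ∈ VRComplex X r)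
    (hΔ' : Δ' ∈ VRComplex X r) {a b : X} (ha : a ∈ Δ ∩ Δ') (hb : b ∈ Δ ∩ Δ')
    (hab : r ≤ dist a b) : Δ ∪ Δ' ∈ VRComplex X r := by
  rw [Finset.mem_inter] at ha hb
  have hcross : ∀ x ∈ Δ, ∀ y ∈ Δ', dist x y ≤ r := by
    intro x hx y hy
    have hmax : max (dist x a + dist y b) (dist x b + dist y a) ≤ r + r :=
      max_le (add_le_add (hΔ.2 x hx a ha.1) (hΔ'.2 y hy b hb.2))
        (add_le_add (hΔ.2 x hx b hb.1) (hΔ'.2 y hy a ha.2))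
    linarith [hX x y a b]
  refine ⟨hΔ.1.mono Finset.subset_union_left, fun x hx y hy ↦ ?_⟩
  rcases Finset.mem_union.1 hx with hx | hx <;> rcases Finset.mem_union.1 hy with hy | hy
  · exact hΔ.2 x hx y hy
  · exact hcross x hx y hy
  · exact dist_comm x y ▸ hcross y hy x hx
  · exact hΔ'.2 x hx y hy

theorem stmt15_general {X : Type*} [MetricSpace X] [DecidableEq X] (hX : FourPointCondition X)
    {r : ℝ} {Δ Δ' : Finset X} (hΔ : Maximal (· ∈ VRComplex X r) Δ)
    (hΔ' : Maximal (· ∈ VRComplex X r) Δ') (hne : Δ ≠ Δ') :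
    ∀ a ∈ Δ ∩ Δ', ∀ b ∈ Δ ∩ Δ', dist a b < r := by
  intro a ha b hb
  by_contra! hab
  have hunion : Δ ∪ Δ' ∈ VRComplex X r := hX.union_mem_VRComplex hΔ.prop hΔ'.prop ha hb hab
  exact hne <| (hΔ.eq_of_le hunion Finset.subset_union_left).trans
    (hΔ'.eq_of_le hunion Finset.subset_union_right).symm

/-- In a finite tree metric space, if `Δ` and `Δ'` are distinct maximal simplices of
`VR_r(V)` (for a distance value `r = r_m`), each containing a non-tree edge of
length `r`, and `Δ ∩ Δ'` is nonempty, then `Δ ∩ Δ'` lies in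
`VR_{r_{m-1}}(V) ∪ T_{r_m}`: either all pairwise distances in `Δ ∩ Δ'` are `< r`
(i.e. `diam(Δ ∩ Δ') ≤ r_{m−1}`), or `Δ ∩ Δ'` is a tree edge of length `r`. -/
theorem stmt15 (V : Type*) [MetricSpace V] [Fintype V] [DecidableEq V]
    (G : SimpleGraph V) (l : Sym2 V → ℝ) (hT : G.IsTree)
    (hl : ∀ e ∈ G.edgeSet, 0 < l e)
    (hd : ∀ (x y : V) (p : G.Walk x y), p.IsPath → dist x y = (p.edges.map l).sum)
    (r : ℝ) (Δ Δ' : Finset V)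
    (hΔ : Δ ∈ VRComplex V r) (hΔ' : Δ' ∈ VRComplex V r)
    (hmax : ∀ σ ∈ VRComplex V r, Δ ⊆ σ → σ = Δ)
    (hmax' : ∀ σ ∈ VRComplex V r, Δ' ⊆ σ → σ = Δ')
    (hne : Δ ≠ Δ')
    (hedge : ∃ a ∈ Δ, ∃ b ∈ Δ, a ≠ b ∧ dist a b = r ∧ ¬G.Adj a b)
    (hedge' : ∃ a ∈ Δ', ∃ b ∈ Δ', a ≠ b ∧ dist a b = r ∧ ¬G.Adj a b)
    (hint : (Δ ∩ Δ').Nonempty) :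
    (∀ a ∈ Δ ∩ Δ', ∀ b ∈ Δ ∩ Δ', dist a b < r) ∨
      (∃ a b : V, G.Adj a b ∧ dist a b = r ∧ Δ ∩ Δ' = {a, b}) := by
  left
  exact stmt15_general (IsPathLengthMetric.fourPointCondition hd hT.connected.preconnected)
    ⟨hΔ, fun σ hσ h ↦ (hmax σ hσ h).le⟩ ⟨hΔ', fun σ hσ h ↦ (hmax' σ hσ h).le⟩ hne
end
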